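/- Let k be a positive integer, p an odd prime, and r ≥ 1 such that q = p^r satisfies q ≡ 3 (mod 4). Then M_{2^k}(𝔽_{q²}) = 2^k + 1; that is, there exists a set of 2^k + 1 pairwise mutually unbiased orthonormal bases of 𝔽_{q²}^{2^k}, and no set of 2^k + 2 such bases exists. -/

import Mathlib

open Finset

/-- The σ-Hermitian inner product on `F^d`, where σ is the `q`-power Frobenius. -/
def hermInner {F : Type*} [Field F] (q : ℕ) {d : ℕ} (u v : Fin d → F) : F :=
  ∑ j, (u j) ^ q * v j

/-- Orthonormal basis: pairwise Hermitian inner products given by the Kronecker delta. -/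
def IsON {F : Type*} [Field F] (q : ℕ) {d : ℕ} (b : Fin d → Fin d → F) : Prop :=
  ∀ i j, hermInner q (b i) (b j) = if i = j then 1 else 0

/-- Mutually unbiased bases: all relative norms of cross inner products equal `(d : F)⁻¹`. -/
def IsMUB {F : Type*} [Field F] (q : ℕ) {d : ℕ} (b c : Fin d → Fin d → F) : Prop :=
  ∀ i j, (hermInner q (b i) (c j)) ^ (q + 1) = (d : F)⁻¹

/-!
Over any field with an involution, the rank-one projectors on the vectors of a family of mutually
unbiased bases of `F^d`, with one vector dropped from each basis, are linearly independent together
with the identity. Hence `m` bases satisfy `m (d - 1) + 1 ≤ d ^ 2`, that is `m ≤ d + 1`.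

For the construction let `L` be the field with `d = 2 ^ k` elements and `ψ` the sign of the trace.
The form `Tr(c x y)` has a quadratic refinement with values in `ZMod 4`. Composed with a square
root `I` of `-1`, it gives unimodular functions `φ_c` with
`φ_c(x + y) = φ_c(x) φ_c(y) ψ(c x y)`, because `q ≡ 3 (mod 4)` makes `I ^ q = -I` the inverse
of `I`. The inner product of `φ_a(x) ψ(b x)` and `φ_{a'}(x) ψ(b' x)` for `a ≠ a'` is the sum of such
a function with `c = a' - a`, so it has relative norm `d` as every Gauss sum does. Since `1 + I` has
norm `2`, the vectors can be normalized in `F`, which contributes `d` bases besides the standard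
one.
-/

section MUBSystem

open Matrix

theorem star_dotProduct_vecMulVec_mulVec {R n : Type*} [CommRing R] [StarRing R] [Fintype n]
    (u v : n → R) :
    star v ⬝ᵥ vecMulVec u (star u) *ᵥ v = star (star u ⬝ᵥ v) * (star u ⬝ᵥ v) := by
  rw [vecMulVec_mulVec, dotProduct_smul, star_dotProduct v u]
  rfl

variable {F ι n : Type*} [Field F] [StarRing F] [Fintype n] [DecidableEq n]

/-- A system of mutually unbiased bases `B a`, `a : ι`, of `F^n`, for the Hermitian form
`star u ⬝ᵥ v` given by an arbitrary involution of the field `F`; `B a i` is the `i`-th vector of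
the `a`-th basis. The relative norm of `x` is written `star x * x`. -/
structure IsMUBSystem (B : ι → n → n → F) : Prop where
  orthonormal : ∀ a i j, star (B a i) ⬝ᵥ B a j = if i = j then 1 else 0
  unbiased : ∀ a b, a ≠ b → ∀ i j,
    star (star (B a i) ⬝ᵥ B b j) * (star (B a i) ⬝ᵥ B b j) = (Fintype.card n : F)⁻¹

theorem IsMUBSystem.reindex {ι' n' : Type*} [Fintype n'] [DecidableEq n'] {B : ι → n → n → F}
    (hB : IsMUBSystem B) {e : ι' → ι} (he : Function.Injective e) (e' : n' ≃ n) :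
    IsMUBSystem fun a i x ↦ B (e a) (e' i) (e' x) := by
  have inner_reindex (a b i j) :
      (star fun x ↦ B (e a) (e' i) (e' x)) ⬝ᵥ (fun x ↦ B (e b) (e' j) (e' x)) =
        star (B (e a) (e' i)) ⬝ᵥ B (e b) (e' j) :=
    e'.sum_comp fun x ↦ star (B (e a) (e' i) x) * B (e b) (e' j) x
  constructor
  · intro a i j
    simp only [inner_reindex, hB.orthonormal, e'.injective.eq_iff]
  · intro a b hab i j
    rw [inner_reindex, hB.unbiased _ _ (he.ne hab), Fintype.card_congr e']

theorem IsMUBSystem.star_dotProduct_projector_mulVec [DecidableEq ι] {B : ι → n → n → F}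
    (hB : IsMUBSystem B) (a b : ι) (i j : n) :
    star (B a i) ⬝ᵥ vecMulVec (B b j) (star (B b j)) *ᵥ B a i =
      if b = a then if j = i then 1 else 0 else (Fintype.card n : F)⁻¹ := by
  rw [star_dotProduct_vecMulVec_mulVec]
  split_ifs with hba hji
  · rw [hba, hB.orthonormal, if_pos hji, star_one, one_mul]
  · rw [hba, hB.orthonormal, if_neg hji, mul_zero]
  · exact hB.unbiased b a hba j i

theorem IsMUBSystem.linearIndependent_projectors [Finite ι] [Nonempty ι]
    {B : ι → n → n → F}
    (hB : IsMUBSystem B) (z : n) :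
    LinearIndependent F fun s : Option (ι × {i // i ≠ z}) ↦
      s.elim (1 : Matrix n n F) fun s ↦ vecMulVec (B s.1 s.2) (star (B s.1 s.2)) := by
  classical
  cases nonempty_fintype ι
  refine Fintype.linearIndependent_iff.2 fun g hg ↦ ?_
  let rest (a : ι) : F := g none +
    ∑ b ∈ univ.erase a, ∑ j : {j // j ≠ z}, g (some (b, j)) * (Fintype.card n : F)⁻¹
  have expectation (a : ι) (i : n) :
      (∑ j : {j // j ≠ z}, if (j : n) = i then g (some (a, j)) else 0) + rest a = 0 := by
    have h := congrArg (fun M ↦ star (B a i) ⬝ᵥ M *ᵥ B a i) hg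
    simp only [Fintype.sum_option, Fintype.sum_prod_type, Option.elim, add_mulVec, sum_mulVec,
      smul_mulVec, one_mulVec, dotProduct_add, dotProduct_sum, dotProduct_smul, smul_eq_mul,
      hB.star_dotProduct_projector_mulVec, hB.orthonormal, zero_mulVec, dotProduct_zero] at h
    have other_bases : ∑ b ∈ univ.erase a, ∑ j : {j // j ≠ z}, g (some (b, j)) *
          (if b = a then if (j : n) = i then 1 else 0 else (Fintype.card n : F)⁻¹) =
        ∑ b ∈ univ.erase a, ∑ j : {j // j ≠ z}, g (some (b, j)) * (Fintype.card n : F)⁻¹ :=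
      sum_congr rfl fun b hb ↦ by simp only [if_neg (ne_of_mem_erase hb)]
    rw [← add_sum_erase _ _ (mem_univ a), other_bases, add_left_comm] at h
    simpa only [if_true, mul_one, mul_ite, mul_zero] using h
  have rest_eq_zero (a : ι) : rest a = 0 := by
    have h := expectation a z
    rwa [sum_eq_zero fun j _ ↦ if_neg j.2, zero_add] at h
  have some_eq_zero (a : ι) (j : {j // j ≠ z}) : g (some (a, j)) = 0 := by
    simpa [rest_eq_zero, Subtype.coe_inj] using expectation a j
  rintro (_ | ⟨a, j⟩)
  · obtain ⟨a⟩ := ‹Nonempty ι›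
    simpa [rest, some_eq_zero] using rest_eq_zero a
  · exact some_eq_zero a j

theorem IsMUBSystem.card_le [Fintype ι] {B : ι → n → n → F} (hB : IsMUBSystem B)
    (hn : 1 < Fintype.card n) : Fintype.card ι ≤ Fintype.card n + 1 := by
  cases isEmpty_or_nonempty ι
  · simp
  obtain ⟨z⟩ : Nonempty n := Fintype.card_pos_iff.1 (by lia)
  have card_bound := (hB.linearIndependent_projectors z).fintype_card_le_finrank
  rw [Module.finrank_matrix, Module.finrank_self, mul_one, Fintype.card_option, Fintype.card_prod,
    Fintype.card_subtype_compl, Fintype.card_subtype_eq] at card_bound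
  obtain ⟨m, hm⟩ : ∃ m, Fintype.card n = m + 2 := Nat.exists_eq_add_of_le' hn
  rw [hm] at card_bound ⊢
  refine Nat.le_of_mul_le_mul_right (c := m + 1) ?_ m.succ_pos
  rw [show m + 2 - 1 = m + 1 from rfl] at card_bound
  linarith

end MUBSystem

section QuadraticPhase

open Matrix

theorem star_addChar_eq_map_neg {F A : Type*} [Field F] [StarRing F] [AddCommGroup A]
    {ψ : AddChar A F} (hψ : ∀ x, star (ψ x) * ψ x = 1) (x : A) : star (ψ x) = ψ (-x) := by
  rw [AddChar.map_neg_eq_inv]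
  exact eq_inv_of_mul_eq_one_left (hψ x)

variable {F L : Type*} [Field F] [StarRing F] [Field L] {ψ : AddChar L F} {c d : L} {f g : L → F}

/-- A unimodular function on `L` which is a "quadratic character": its failure to be additive is
the bicharacter `ψ (c x y)`. For `c = 1` and `2 ≠ 0` the example is `x ↦ ψ (x ^ 2 / 2)`. -/
structure IsQuadraticPhase (ψ : AddChar L F) (c : L) (f : L → F) : Prop where
  map_add : ∀ x y, f (x + y) = f x * f y * ψ (c * (x * y))
  star_mul_self : ∀ x, star (f x) * f x = 1

namespace IsQuadraticPhase

protected theorem map_zero (hf : IsQuadraticPhase ψ c f) : f 0 = 1 := by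
  have hf0 : f 0 ≠ 0 := right_ne_zero_of_mul_eq_one (hf.star_mul_self 0)
  have h := hf.map_add 0 0
  simp only [add_zero, mul_zero, AddChar.map_zero_eq_one, mul_one] at h
  exact (mul_eq_left₀ hf0).1 h.symm

protected theorem star (hψ : ∀ x, star (ψ x) * ψ x = 1) (hf : IsQuadraticPhase ψ c f) :
    IsQuadraticPhase ψ (-c) (star f) where
  map_add x y := by
    simp only [Pi.star_apply, hf.map_add, star_mul', star_addChar_eq_map_neg hψ, neg_mul]
  star_mul_self x := by
    rw [Pi.star_apply, ← star_mul', hf.star_mul_self, star_one]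

protected theorem mul (hf : IsQuadraticPhase ψ c f) (hg : IsQuadraticPhase ψ d g) :
    IsQuadraticPhase ψ (c + d) (f * g) where
  map_add x y := by
    simp only [Pi.mul_apply, hf.map_add, hg.map_add, add_mul, AddChar.map_add_eq_mul]
    ring
  star_mul_self x := by
    rw [Pi.mul_apply, star_mul', mul_mul_mul_comm, hf.star_mul_self, hg.star_mul_self, one_mul]

protected theorem mulShift (hψ : ∀ x, star (ψ x) * ψ x = 1) (b : L) :
    IsQuadraticPhase ψ 0 (ψ.mulShift b) where
  map_add x y := by
    rw [zero_mul, AddChar.map_zero_eq_one, mul_one, AddChar.map_add_eq_mul]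
  star_mul_self x := hψ (b * x)

theorem star_sum_mul_sum [Fintype L] (hf : IsQuadraticPhase ψ c f) (hψ : ψ ≠ 1) (hc : c ≠ 0) :
    star (∑ x, f x) * ∑ x, f x = Fintype.card L := by
  classical
  have star_mul_sum (x : L) : star (f x) * ∑ y, f y = ∑ t, f t * ψ (x * (c * t)) := by
    rw [← Equiv.sum_comp (Equiv.addLeft x) f, mul_sum]
    refine sum_congr rfl fun t _ ↦ ?_
    rw [Equiv.coe_addLeft, hf.map_add, ← mul_assoc, ← mul_assoc, hf.star_mul_self, one_mul,
      mul_left_comm c]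
  calc star (∑ x, f x) * ∑ x, f x
    _ = ∑ t, f t * ∑ x, ψ (x * (c * t)) := by
      simp only [star_sum, sum_mul, star_mul_sum]
      rw [sum_comm]
      simp only [mul_sum]
    _ = ∑ t, f t * if t = 0 then (Fintype.card L : F) else 0 := by
      simp [AddChar.sum_mulShift _ (AddChar.IsPrimitive.of_ne_one hψ), hc]
    _ = Fintype.card L := by simp [hf.map_zero]

theorem norm_star_dotProduct [Fintype L] (hψ : ∀ x, star (ψ x) * ψ x = 1) (hψ_ne : ψ ≠ 1)
    (hf : IsQuadraticPhase ψ c f) (hg : IsQuadraticPhase ψ d g) (hcd : c ≠ d) :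
    star (star f ⬝ᵥ g) * (star f ⬝ᵥ g) = Fintype.card L :=
  ((hf.star hψ).mul hg).star_sum_mul_sum hψ_ne (neg_add_eq_zero.not.2 hcd)

theorem star_dotProduct_mul_mulShift [Fintype L] [DecidableEq L]
    (hψ : ∀ x, star (ψ x) * ψ x = 1) (hψ_ne : ψ ≠ 1) (hf : IsQuadraticPhase ψ c f)
    (b b' : L) :
    star (f * ⇑(ψ.mulShift b)) ⬝ᵥ (f * ⇑(ψ.mulShift b')) =
      if b = b' then (Fintype.card L : F) else 0 := by
  have summand (x : L) :
      star (f x * ψ (b * x)) * (f x * ψ (b' * x)) = ψ (x * (b' - b)) := by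
    rw [star_mul', mul_mul_mul_comm, hf.star_mul_self, one_mul, star_addChar_eq_map_neg hψ,
      ← AddChar.map_add_eq_mul]
    ring_nf
  calc star (f * ⇑(ψ.mulShift b)) ⬝ᵥ (f * ⇑(ψ.mulShift b'))
    _ = ∑ x, ψ (x * (b' - b)) := sum_congr rfl fun x _ ↦ summand x
    _ = if b = b' then (Fintype.card L : F) else 0 := by
      simp only [AddChar.sum_mulShift _ (AddChar.IsPrimitive.of_ne_one hψ_ne), sub_eq_zero,
        eq_comm (a := b), Nat.cast_ite, Nat.cast_zero]

end IsQuadraticPhase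

/-- The standard basis of `F^L`, together with the bases `b ↦ α φ_a(x) ψ(b x)`, `a : L`. The
scalar `α` is there to normalize the vectors of the latter. -/
def phaseBases [DecidableEq L] (ψ : AddChar L F) (φ : L → L → F) (α : F) :
    Option L → L → L → F
  | none => fun i ↦ Pi.single i 1
  | some a => fun b ↦ α • (φ a * ⇑(ψ.mulShift b))

theorem isMUBSystem_phaseBases [Fintype L] [DecidableEq L] (hψ : ∀ x, star (ψ x) * ψ x = 1)
    (hψ_ne : ψ ≠ 1) {φ : L → L → F} (hφ : ∀ a, IsQuadraticPhase ψ a (φ a)) {α : F}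
    (hα : star α * α = (Fintype.card L : F)⁻¹) (hL : (Fintype.card L : F) ≠ 0) :
    IsMUBSystem (phaseBases ψ φ α) := by
  have phase (a b : L) : IsQuadraticPhase ψ a (φ a * ⇑(ψ.mulShift b)) := by
    simpa only [add_zero] using (hφ a).mul (.mulShift hψ b)
  have norm_entry (a b x : L) :
      star ((α • (φ a * ⇑(ψ.mulShift b))) x) * (α • (φ a * ⇑(ψ.mulShift b))) x =
        (Fintype.card L : F)⁻¹ := by
    rw [Pi.smul_apply, smul_eq_mul, star_mul', mul_mul_mul_comm, hα, (phase a b).star_mul_self,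
      mul_one]
  have inner_smul (u v : L → F) :
      star (α • u) ⬝ᵥ (α • v) = (Fintype.card L : F)⁻¹ * (star u ⬝ᵥ v) := by
    rw [star_smul, smul_dotProduct, dotProduct_smul, smul_eq_mul, smul_eq_mul, ← mul_assoc, hα]
  constructor
  · rintro (_ | a) i j
    · simp [phaseBases, Pi.single_apply, eq_comm]
    · rw [phaseBases, inner_smul, (hφ a).star_dotProduct_mul_mulShift hψ hψ_ne, mul_ite,
        inv_mul_cancel₀ hL, mul_zero]
  · rintro (_ | a) (_ | b) hab i j
    · exact absurd rfl hab
    · simpa [phaseBases] using norm_entry b j i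
    · rw [star_dotProduct, star_star, mul_comm]
      simpa [phaseBases] using norm_entry a i j
    · have hab : a ≠ b := mt (congrArg some) hab
      rw [phaseBases, phaseBases, inner_smul, star_mul', mul_mul_mul_comm, star_inv₀,
        star_natCast, (phase a i).norm_star_dotProduct hψ hψ_ne (phase b j) hab,
        inv_mul_cancel_right₀ hL]

end QuadraticPhase

section QuadraticRefinement

theorem zmod_two_cast_add (a b : ZMod 2) :
    ((a + b).cast : ZMod 4) = a.cast + b.cast + 2 * (a.cast * b.cast) := by
  revert a b; decide

theorem zmod_four_two_mul_cast_cast (a : ZMod 4) :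
    2 * ((a.cast : ZMod 2).cast : ZMod 4) = 2 * a := by
  revert a; decide

theorem bilinForm_add_self {R M : Type*} [CommRing R] [AddCommGroup M] [Module R M]
    {B : LinearMap.BilinForm R M} (hB : B.IsSymm) (x y : M) :
    B (x + y) (x + y) = B x x + B y y + 2 * B x y := by
  simp only [map_add, LinearMap.add_apply, hB.eq y x]
  ring

theorem exists_quadraticRefinement {V : Type*} [AddCommGroup V] [Module (ZMod 2) V]
    [FiniteDimensional (ZMod 2) V] {β : LinearMap.BilinForm (ZMod 2) V} (hβ : β.IsSymm) :
    ∃ Q : V → ZMod 4, ∀ x y, Q (x + y) = Q x + Q y + 2 * (β x y).cast := by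
  -- Lift the coordinates and the Gram matrix to `ZMod 4`. As the matrix is symmetric and `4 = 0`,
  -- changing a lift by `2 • w` does not affect the value of the quadratic form.
  let b := Module.finBasis (ZMod 2) V
  let lift (x : V) : Fin _ → ZMod 4 := fun i ↦ (b.repr x i).cast
  let B := Matrix.toBilin' ((LinearMap.BilinForm.toMatrix b β).map (ZMod.cast : ZMod 2 → ZMod 4))
  have B_symm : B.IsSymm := Matrix.isSymm_toBilin'_iff_isSymm.2
    ((LinearMap.BilinForm.isSymm_toMatrix_iff_isSymm b).2 hβ |>.map _)
  have lift_add (x y : V) : lift (x + y) = lift x + lift y + (2 : ZMod 4) • (lift x * lift y) := by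
    funext i
    simp [lift, zmod_two_cast_add]
  have two_mul_cast (x y : V) : 2 * ((β x y).cast : ZMod 4) = 2 * B (lift x) (lift y) := by
    let π : ZMod 4 →+* ZMod 2 := ZMod.castHom (by decide) _
    have π_cast (a : ZMod 2) : π a.cast = a := by revert a; decide
    have π_B : π (B (lift x) (lift y)) = β x y := by
      rw [LinearMap.BilinForm.apply_eq_dotProduct_toMatrix_mulVec b, ← Matrix.toBilin'_apply']
      simp only [B, lift, Matrix.toBilin'_apply, Matrix.map_apply, map_sum, map_mul, π_cast]
    rw [← π_B, ZMod.castHom_apply, zmod_four_two_mul_cast_cast]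
  have B_congr (u w : Fin _ → ZMod 4) :
      B (u + (2 : ZMod 4) • w) (u + (2 : ZMod 4) • w) = B u u := by
    have four_eq_zero : (4 : ZMod 4) = 0 := rfl
    rw [bilinForm_add_self B_symm]
    simp only [map_smul, LinearMap.smul_apply, smul_eq_mul]
    linear_combination (B w w + B u w) * four_eq_zero
  refine ⟨fun x ↦ B (lift x) (lift x), fun x y ↦ ?_⟩
  simp only [lift_add, B_congr, bilinForm_add_self B_symm, two_mul_cast]

end QuadraticRefinement

section TraceSign

variable {F L : Type*} [Field F] [Field L] [Algebra (ZMod 2) L]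

/-- The additive character `x ↦ (-1)^Tr(x)`, where `Tr` is the trace down to the field with two
elements. -/
noncomputable def traceSign (F L : Type*) [Field F] [Field L] [Algebra (ZMod 2) L] : AddChar L F :=
  (AddChar.zmodChar 2 (neg_one_sq : (-1 : F) ^ 2 = 1)).compAddMonoidHom
    (Algebra.trace (ZMod 2) L).toAddMonoidHom

theorem traceSign_apply (x : L) : traceSign F L x = (-1) ^ (Algebra.trace (ZMod 2) L x).val :=
  rfl

theorem traceSign_ne_one [Finite L] (h2 : (2 : F) ≠ 0) : traceSign F L ≠ 1 := by
  obtain ⟨x, hx⟩ := Algebra.trace_surjective (ZMod 2) L 1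
  refine AddChar.ne_one_iff.2 ⟨x, ?_⟩
  rw [traceSign_apply, hx, ZMod.val_one, pow_one]
  exact fun h ↦ h2 (by linear_combination -h)

variable [StarRing F]

theorem star_traceSign_mul_self (x : L) : star (traceSign F L x) * traceSign F L x = 1 := by
  simp [traceSign_apply, ← mul_pow]

theorem exists_isQuadraticPhase_traceSign [Finite L] {I : F} (hI : I ^ 2 = -1)
    (hI_star : star I = -I) (c : L) : ∃ f : L → F, IsQuadraticPhase (traceSign F L) c f := by
  have hI4 : I ^ 4 = 1 := by linear_combination (I ^ 2 - 1) * hI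
  let χ : AddChar (ZMod 4) F := AddChar.zmodChar 4 hI4
  have χ_two_mul_cast (a : ZMod 2) : χ (2 * a.cast) = (-1) ^ a.val := by
    have val_two_mul_cast : (2 * a.cast : ZMod 4).val = 2 * a.val := by revert a; decide
    rw [AddChar.zmodChar_apply, val_two_mul_cast, pow_mul, hI]
  let β : LinearMap.BilinForm (ZMod 2) L :=
    (Algebra.traceForm (ZMod 2) L).compLeft (LinearMap.mulLeft _ c)
  have β_apply (x y : L) : β x y = Algebra.trace (ZMod 2) L (c * (x * y)) := by
    simp [β, Algebra.traceForm_apply, mul_assoc]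
  have β_symm : β.IsSymm := ⟨fun x y ↦ by rw [β_apply, β_apply, mul_comm x]⟩
  obtain ⟨Q, hQ⟩ := exists_quadraticRefinement β_symm
  refine ⟨fun x ↦ χ (Q x), fun x y ↦ ?_, fun x ↦ ?_⟩
  · rw [hQ, AddChar.map_add_eq_mul, AddChar.map_add_eq_mul, χ_two_mul_cast, β_apply,
      traceSign_apply]
  · have star_I_mul_I : star I * I = 1 := by linear_combination I * hI_star - hI
    rw [AddChar.zmodChar_apply, star_pow, ← mul_pow, star_I_mul_I, one_pow]

end TraceSign

theorem exists_isMUBSystem_two_pow {F : Type*} [Field F] [StarRing F] (h2 : (2 : F) ≠ 0) {I : F}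
    (hI : I ^ 2 = -1) (hI_star : star I = -I) {k : ℕ} (hk : k ≠ 0) :
    ∃ B : Fin (2 ^ k + 1) → Fin (2 ^ k) → Fin (2 ^ k) → F, IsMUBSystem B := by
  classical
  let L := GaloisField 2 k
  have : Fintype L := Fintype.ofFinite L
  have card_L : Fintype.card L = 2 ^ k := by
    rw [← Nat.card_eq_fintype_card, GaloisField.card 2 k hk]
  have cast_card_L : (Fintype.card L : F) = 2 ^ k := by rw [card_L, Nat.cast_pow, Nat.cast_ofNat]
  choose φ hφ using exists_isQuadraticPhase_traceSign (L := L) hI hI_star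
  have norm_α : star ((1 + I)⁻¹ ^ k) * (1 + I)⁻¹ ^ k = (Fintype.card L : F)⁻¹ := by
    have norm_one_add_I : star (1 + I) * (1 + I) = 2 := by
      rw [star_add, star_one, hI_star]
      linear_combination -hI
    rw [star_pow, star_inv₀, ← mul_pow, ← mul_inv, norm_one_add_I, inv_pow, cast_card_L]
  have mub := isMUBSystem_phaseBases star_traceSign_mul_self (traceSign_ne_one h2) hφ norm_α
    (cast_card_L ▸ pow_ne_zero k h2)
  let e : Fin (2 ^ k + 1) ≃ Option L :=
    (Fintype.equivFinOfCardEq (by rw [Fintype.card_option, card_L])).symm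
  exact ⟨_, mub.reindex e.injective (Fintype.equivFinOfCardEq card_L).symm⟩

theorem stmt5_general {F : Type*} [Field F] [StarRing F] (h2 : (2 : F) ≠ 0) {I : F}
    (hI : I ^ 2 = -1) (hI_star : star I = -I) {k : ℕ} (hk : 1 ≤ k) :
    (∃ B : Fin (2 ^ k + 1) → Fin (2 ^ k) → Fin (2 ^ k) → F, IsMUBSystem B) ∧
      ¬ ∃ B : Fin (2 ^ k + 2) → Fin (2 ^ k) → Fin (2 ^ k) → F, IsMUBSystem B := by
  refine ⟨exists_isMUBSystem_two_pow h2 hI hI_star (by lia), fun ⟨B, hB⟩ ↦ ?_⟩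
  have card_le := hB.card_le (by rw [Fintype.card_fin]; exact Nat.one_lt_two_pow (by lia))
  rw [Fintype.card_fin, Fintype.card_fin] at card_le
  lia

section Frobenius

variable {F : Type*} [Field F]

/-- The involution `x ↦ x ^ q`, `q = p ^ r`, of the field with `q ^ 2` elements. -/
abbrev frobeniusStarRing [Fintype F] (p r : ℕ) [ExpChar F p]
    (hF : Fintype.card F = (p ^ r) ^ 2) : StarRing F where
  star := iterateFrobenius F p r
  star_involutive x := by
    rw [iterateFrobenius_def, iterateFrobenius_def, ← pow_mul, ← sq, ← hF, FiniteField.pow_card]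
  star_mul x y := by rw [map_mul, mul_comm]
  star_add := map_add _

theorem isMUBSystem_iff_isON_and_isMUB [StarRing F] {q d : ℕ} {ι : Type*}
    (hq : ∀ x : F, star x = x ^ q) (B : ι → Fin d → Fin d → F) :
    IsMUBSystem B ↔ (∀ i, IsON q (B i)) ∧ ∀ i j, i ≠ j → IsMUB q (B i) (B j) := by
  have hermInner_eq (u v : Fin d → F) : hermInner q u v = star u ⬝ᵥ v := by
    simp only [hermInner, dotProduct, Pi.star_apply, hq]
  simp only [IsON, IsMUB, hermInner_eq, pow_succ, ← hq]
  exact ⟨fun h ↦ ⟨h.orthonormal, by simpa only [Fintype.card_fin] using h.unbiased⟩,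
    fun h ↦ ⟨h.1, by simpa only [Fintype.card_fin] using h.2⟩⟩

theorem exists_sq_eq_neg_one_of_card_eq_sq [Fintype F] {q : ℕ} (hq : q % 4 = 3)
    (hF : Fintype.card F = q ^ 2) :
    ∃ I : F, I ^ 2 = -1 ∧ I ^ q = -I := by
  obtain ⟨I, hI⟩ : IsSquare (-1 : F) := by
    rw [FiniteField.isSquare_neg_one_iff, hF, sq, Nat.mul_mod, hq]
    decide
  have hI2 : I ^ 2 = -1 := by rw [sq, hI]
  have hI4 : I ^ 4 = 1 := by linear_combination (I ^ 2 - 1) * hI2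
  refine ⟨I, hI2, ?_⟩
  rw [← Nat.div_add_mod q 4, hq, pow_add, pow_mul, hI4, one_pow]
  linear_combination I * hI2

theorem exists_starRing_star_eq_pow [Fintype F] {p r q : ℕ} (hp : p.Prime) (hq : q = p ^ r)
    (hq_mod : q % 4 = 3) (hF : Fintype.card F = q ^ 2) :
    ∃ _ : StarRing F, (∀ x : F, star x = x ^ q) ∧ ∃ I : F, I ^ 2 = -1 ∧ star I = -I := by
  have := Fact.mk hp
  have : CharP F p := charP_of_card_eq_prime_pow (f := r * 2) (by rw [hF, hq, pow_mul])
  have star_eq (x : F) : iterateFrobenius F p r x = x ^ q := hq ▸ iterateFrobenius_def p r x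
  obtain ⟨I, hI, hIq⟩ := exists_sq_eq_neg_one_of_card_eq_sq hq_mod hF
  exact ⟨frobeniusStarRing p r (hq ▸ hF), star_eq, I, hI, (star_eq I).trans hIq⟩

theorem two_ne_zero_of_odd_card [Fintype F] (hF : Odd (Fintype.card F)) : (2 : F) ≠ 0 :=
  Ring.two_ne_zero fun h ↦ by
    have := FiniteField.even_card_of_char_two h
    rw [Nat.odd_iff] at hF
    lia

end Frobenius

/-- Let `k ≥ 1`, `p` an odd prime and `q = p^r ≡ 3 (mod 4)`.  Then
`M_{2^k}(𝔽_{q²}) = 2^k + 1`: there exist `2^k + 1` pairwise mutually unbiased orthonormal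
bases of `𝔽_{q²}^{2^k}`, and no `2^k + 2` such bases exist. -/
theorem stmt5 (k p r : ℕ) (hk : 1 ≤ k) (hp : p.Prime) (hpodd : Odd p)
    (hr : 1 ≤ r) (q : ℕ) (hq : q = p ^ r) (hcong : q % 4 = 3)
    (F : Type) [Field F] [Fintype F] (hF : Fintype.card F = q ^ 2) :
    (∃ B : Fin (2 ^ k + 1) → Fin (2 ^ k) → Fin (2 ^ k) → F,
        (∀ i, IsON q (B i)) ∧ ∀ i j, i ≠ j → IsMUB q (B i) (B j))
    ∧ ¬ ∃ B : Fin (2 ^ k + 2) → Fin (2 ^ k) → Fin (2 ^ k) → F,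
        (∀ i, IsON q (B i)) ∧ ∀ i j, i ≠ j → IsMUB q (B i) (B j) := by
  obtain ⟨_, star_eq, I, hI, hI_star⟩ := exists_starRing_star_eq_pow hp hq hcong hF
  have two_ne_zero : (2 : F) ≠ 0 := two_ne_zero_of_odd_card (hF ▸ (Nat.odd_iff.2 (by lia)).pow)
  simpa only [isMUBSystem_iff_isON_and_isMUB star_eq] using
    stmt5_general two_ne_zero hI hI_star hk
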